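/- arXiv:2206.01175 — 5 statements merged into one kernel-verified Lean document; each statement's English description precedes it below -/
import Mathlib

section
/- Let m, η, r, g, ζ, ρ, Cd, ς be positive real constants and let p, v, a, T, u : ℝ → ℝ be differentiable functions satisfying the nonlinear longitudinal vehicle dynamics with zero wind speed and zero road slope: p' = v, v' = a, m·a(t) = (η/r)·T(t) − (1/2)·ρ·Cd·v(t)² − m·g·ζ for all t, together with the power-train dynamics T'(t) = (T̃(t) − T(t))/ς, where the desired torque is the feedback-linearizing law T̃(t) = (r/η)·[ (1/2)·ρ·Cd·v(t)·(2·ς·a(t) + v(t)) + m·g·ζ + m·u(t) ]. Then the acceleration satisfies the linear first-order dynamics a'(t) = (u(t) − a(t))/ς for all t; i.e., the closed-loop system is the linear model p' = v, v' = a, a' = −(1/ς)a + (1/ς)u. -/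
/-!
The drive-train gain `k` carries the torque lag `ς T' = T̃ - T` over to the driving force
`k T = m a + F`, where `F` is the resistance. Asking for `k T̃ = F + ς F' + m u` therefore makes
`m a + F` follow `F + ς F' + m u` with time constant `ς`. The resistance `F` is itself the solution
of that lag with input `F + ς F'`, so it cancels and leaves `ς a' = u - a`.
-/

open Topology

section FeedbackLinearization

/-- The desired torque that linearizes a vehicle of mass `m` and drive-train gain `k` (driving force
per unit torque) with torque time constant `ς`. The resistance enters through its current value `F`
and its time derivative `F'`; `u` is the new control input, an acceleration. -/
def linearizingTorque {K : Type*} [Field K] (m k ς F F' u : K) : K :=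
  (F + ς * F' + m * u) / k

theorem jerk_eq_of_linearizingTorque {K : Type*} [Field K] {m k ς F F' T a u : K}
    (hm : m ≠ 0) (hk : k ≠ 0) (hς : ς ≠ 0) (hforce : m * a = k * T - F) :
    (k * ((linearizingTorque m k ς F F' u - T) / ς) - F') / m = (u - a) / ς := by
  have hlag : k * (linearizingTorque m k ς F F' u - T) = m * (u - a) + ς * F' := by
    rw [linearizingTorque, mul_sub, mul_div_cancel₀ _ hk]
    linear_combination hforce
  rw [← mul_div_assoc, hlag]
  field_simp
  ring

variable {𝕜 : Type*} [NontriviallyNormedField 𝕜] {m k t : 𝕜} {F T a : 𝕜 → 𝕜}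

theorem hasDerivAt_acceleration_of_force_balance {F' T' : 𝕜} (hm : m ≠ 0)
    (hF : HasDerivAt F F' t) (hT : HasDerivAt T T' t)
    (hforce : ∀ᶠ s in 𝓝 t, m * a s = k * T s - F s) :
    HasDerivAt a ((k * T' - F') / m) t := by
  have ha : a =ᶠ[𝓝 t] fun s => (k * T s - F s) / m :=
    hforce.mono fun s hs => eq_div_of_mul_eq hm (by rw [mul_comm, hs])
  exact (((hT.const_mul k).sub hF).div_const m).congr_of_eventuallyEq ha

theorem stmt_0_general {ς F' Tdes u : 𝕜} (hm : m ≠ 0) (hk : k ≠ 0) (hς : ς ≠ 0)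
    (hF : HasDerivAt F F' t) (hT : HasDerivAt T ((Tdes - T t) / ς) t)
    (hTdes : Tdes = linearizingTorque m k ς (F t) F' u)
    (hforce : ∀ᶠ s in 𝓝 t, m * a s = k * T s - F s) :
    HasDerivAt a ((u - a t) / ς) t := by
  rw [← jerk_eq_of_linearizingTorque hm hk hς hforce.self_of_nhds, ← hTdes]
  exact hasDerivAt_acceleration_of_force_balance hm hF hT hforce

end FeedbackLinearization

section RoadLoad

/-- The resistance met by a vehicle at speed `v` on a level road without wind: aerodynamic drag plus
rolling friction. -/
def roadLoad {K : Type*} [Field K] (m g ζ ρ Cd v : K) : K :=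
  1 / 2 * ρ * Cd * v ^ 2 + m * g * ζ

theorem hasDerivAt_roadLoad_comp {𝕜 : Type*} [NontriviallyNormedField 𝕜] [NeZero (2 : 𝕜)]
    (m g ζ ρ Cd : 𝕜) {v : 𝕜 → 𝕜} {v' t : 𝕜} (hv : HasDerivAt v v' t) :
    HasDerivAt (fun s => roadLoad m g ζ ρ Cd (v s)) (ρ * Cd * v t * v') t := by
  refine (((hv.pow 2).const_mul (1 / 2 * ρ * Cd)).add_const (m * g * ζ)).congr_deriv ?_
  simp only [Nat.cast_ofNat, Nat.add_one_sub_one, pow_one]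
  field_simp

theorem linearizingTorque_roadLoad {K : Type*} [Field K] [NeZero (2 : K)]
    (m η r g ζ ρ Cd ς v a u : K) :
    linearizingTorque m (η / r) ς (roadLoad m g ζ ρ Cd v) (ρ * Cd * v * a) u =
      r / η * (1 / 2 * ρ * Cd * v * (2 * ς * a + v) + m * g * ζ + m * u) := by
  rw [linearizingTorque, roadLoad, div_eq_inv_mul, inv_div]
  field_simp
  ring

end RoadLoad

/-- Feedback linearization of the nonlinear longitudinal vehicle dynamics:
under the feedback-linearizing desired torque law, the closed-loop acceleration
satisfies the linear first-order dynamics `a' = (u - a)/ς`. -/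
theorem stmt_0
    (m η r g ζ ρ Cd ς : ℝ)
    (hm : 0 < m) (hη : 0 < η) (hr : 0 < r) (hg : 0 < g) (hζ : 0 < ζ)
    (hρ : 0 < ρ) (hCd : 0 < Cd) (hς : 0 < ς)
    (p v a T u : ℝ → ℝ)
    (hp : Differentiable ℝ p) (hv : Differentiable ℝ v)
    (ha : Differentiable ℝ a) (hT : Differentiable ℝ T)
    (hu : Differentiable ℝ u)
    (Tdes : ℝ → ℝ)
    (hTdes : ∀ t, Tdes t =
      (r / η) * ((1 / 2) * ρ * Cd * v t * (2 * ς * a t + v t) + m * g * ζ + m * u t))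
    (hpv : ∀ t, deriv p t = v t)
    (hva : ∀ t, deriv v t = a t)
    (hforce : ∀ t, m * a t = (η / r) * T t - (1 / 2) * ρ * Cd * (v t) ^ 2 - m * g * ζ)
    (hpt : ∀ t, deriv T t = (Tdes t - T t) / ς) :
    ∀ t, deriv a t = (u t - a t) / ς :=
  fun t => (stmt_0_general hm.ne' (div_pos hη hr).ne' hς.ne'
    (hasDerivAt_roadLoad_comp m g ζ ρ Cd (hva t ▸ (hv t).hasDerivAt))
    (hpt t ▸ (hT t).hasDerivAt)
    ((hTdes t).trans (linearizingTorque_roadLoad m η r g ζ ρ Cd ς (v t) (a t) (u t)).symm)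
    (.of_forall fun s => (hforce s).trans (sub_sub _ _ _))).deriv
end

section
/- Let ς and k be real numbers with ς > 0, k > 0 and 1 + k > ς. Then every complex root z of the closed-loop characteristic polynomial ς·X³ + (1 + k)·X² + k·X + k has strictly negative real part (i.e., the feedback loop of the static linear policy μ(e) = k·e with the plant G(s) = (s² + s + 1)/(ς·s²·(s + 1/ς)) is asymptotically stable). -/
/-!
If `z ≠ w` are roots of `a X³ + b X² + c X + d`, then by Vieta `a (z + w) + b` is `-a` times the
third root, and eliminating `z w` leaves an equation for the sum `s = z + w` alone:
`(a s + b) (a s² + b s + c) = a d`. A non-real root `z` of a real cubic has `conj z` as another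
root, so `s = 2 Re z`. If `Re z` were nonnegative, the left-hand side would be at least `b c`,
contradicting the Routh–Hurwitz inequality `a d < b c`.
-/

theorem cubic_sum_of_two_roots {R : Type*} [CommRing R] [NoZeroDivisors R] {a b c d z w : R}
    (hz : a * z ^ 3 + b * z ^ 2 + c * z + d = 0) (hw : a * w ^ 3 + b * w ^ 2 + c * w + d = 0)
    (hzw : z ≠ w) :
    (a * (z + w) + b) * (a * (z + w) ^ 2 + b * (z + w) + c) = a * d := by
  have divided_difference : a * (z ^ 2 + z * w + w ^ 2) + b * (z + w) + c = 0 :=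
    mul_left_cancel₀ (sub_ne_zero.2 hzw) (by linear_combination hz - hw)
  have vieta_linear : a * (z + w) ^ 2 + b * (z + w) + c = a * (z * w) := by
    linear_combination divided_difference
  have vieta_const : (a * (z + w) + b) * (z * w) = d := by
    linear_combination z * divided_difference - hz
  rw [vieta_linear, mul_left_comm, vieta_const]

section RouthHurwitz

variable {a b c d : ℝ}

theorem cubic_conj_eq_zero {z : ℂ}
    (hz : (a : ℂ) * z ^ 3 + b * z ^ 2 + c * z + d = 0) :
    (a : ℂ) * (starRingEnd ℂ z) ^ 3 + b * (starRingEnd ℂ z) ^ 2 + c * starRingEnd ℂ z + d = 0 := by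
  simpa only [map_add, map_mul, map_pow, map_zero, Complex.conj_ofReal] using
    congrArg (starRingEnd ℂ) hz

/-- The Routh–Hurwitz criterion for cubics: `a`, `b`, `(b c - a d) / b` and `d` form the first
column of the Routh array. -/
theorem re_neg_of_cubic_eq_zero (ha : 0 ≤ a) (hb : 0 < b) (hd : 0 < d) (had : a * d < b * c)
    {z : ℂ} (hz : (a : ℂ) * z ^ 3 + b * z ^ 2 + c * z + d = 0) : z.re < 0 := by
  have hc : 0 < c := pos_of_mul_pos_right ((mul_nonneg ha hd.le).trans_lt had) hb.le
  by_contra! hre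
  by_cases hreal : starRingEnd ℂ z = z
  · obtain ⟨x, rfl⟩ := Complex.conj_eq_iff_real.1 hreal
    rw [Complex.ofReal_re] at hre
    have root : a * x ^ 3 + b * x ^ 2 + c * x + d = 0 := mod_cast hz
    have pos : 0 < a * x ^ 3 + b * x ^ 2 + c * x + d := by positivity
    exact pos.ne' root
  · have sum_eq := cubic_sum_of_two_roots hz (cubic_conj_eq_zero hz) (Ne.symm hreal)
    rw [Complex.add_conj] at sum_eq
    set s := 2 * z.re
    have : 0 ≤ s := mul_nonneg zero_le_two hre
    have sum_eq_real : (a * s + b) * (a * s ^ 2 + b * s + c) = a * d := mod_cast sum_eq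
    have le_left : b ≤ a * s + b := le_add_of_nonneg_left (by positivity)
    have le_right : c ≤ a * s ^ 2 + b * s + c := le_add_of_nonneg_left (by positivity)
    have : b * c ≤ a * d := calc
      b * c ≤ (a * s + b) * (a * s ^ 2 + b * s + c) := by gcongr
      _ = a * d := sum_eq_real
    exact this.not_gt had

end RouthHurwitz

/-- Routh–Hurwitz stability of the closed loop with the static linear policy
`μ(e) = k e`: if `ς > 0`, `k > 0` and `1 + k > ς`, every complex root of the
closed-loop characteristic polynomial `ς X³ + (1 + k) X² + k X + k` has
strictly negative real part. -/
theorem stmt_6 (ς k : ℝ) (hς : 0 < ς) (hk : 0 < k) (hkς : 1 + k > ς) :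
    ∀ z : ℂ, (ς : ℂ) * z ^ 3 + (1 + (k : ℂ)) * z ^ 2 + (k : ℂ) * z + (k : ℂ) = 0 →
      z.re < 0 := by
  intro z hz
  have routh_hurwitz : ς * k < (1 + k) * k := mul_lt_mul_of_pos_right hkς hk
  exact re_neg_of_cubic_eq_zero hς.le (by positivity) hk routh_hurwitz (mod_cast hz)
end

section
/- Let ς and k be real numbers with 0 < ς < 1 and k > 1/(1 − ς). Then every complex root z of the polynomial ς·X⁴ + X³ + k·X² + k·X + k has strictly negative real part (i.e., the feedback loop of the integral-action linear policy, with open-loop transfer s⁻¹·G(s), is asymptotically stable). -/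
/-!
On the closed right half-plane, Routh's division scheme applied to the even part `E` and the odd
part `O` of the characteristic polynomial writes `E / O` as the continued fraction
`c₁ z + 1 / (c₂ z + 1 / (c₃ z + 1 / (c₄ z)))`, whose coefficients are nonnegative under the
Hurwitz determinant condition. Both `w ↦ 1 / w` and the addition of `c z` preserve the closed right
half-plane, so `E / O` never takes the value `-1`, that is, `E + O` does not vanish there.
-/

open scoped ComplexConjugate

/-- The point `u / v` of the Riemann sphere, with homogeneous coordinates `(u, v) ≠ (0, 0)`, lies
in the closed right half-plane or is `∞`. The homogeneous form lets Routh's continued fraction be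
evaluated at points where one of its denominators vanishes. -/
def ReDivNonneg (u v : ℂ) : Prop :=
  0 ≤ (u * conj v).re ∧ (u ≠ 0 ∨ v ≠ 0)

namespace ReDivNonneg

variable {u v w z : ℂ} {a b d e : ℝ}

lemma zero_right (hu : u ≠ 0) : ReDivNonneg u 0 :=
  ⟨by simp, .inl hu⟩

-- In terms of quotients, `u / v = c * z + 1 / (v / w)`.
lemma of_eq_mul_add {c : ℝ} (hc : 0 ≤ c) (hz : 0 ≤ z.re) (hvw : ReDivNonneg v w)
    (hu : u = c * z * v + w) : ReDivNonneg u v := by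
  obtain ⟨hre, hne⟩ := hvw
  constructor
  · have hre_eq : (u * conj v).re = c * z.re * Complex.normSq v + (v * conj w).re := by
      simp only [hu, Complex.normSq_apply, Complex.mul_re, Complex.mul_im, Complex.add_re,
        Complex.add_im, Complex.conj_re, Complex.conj_im, Complex.ofReal_re, Complex.ofReal_im]
      ring
    have := Complex.normSq_nonneg v
    rw [hre_eq]
    positivity
  · by_contra! h
    obtain ⟨rfl, rfl⟩ := h
    have hw : w = 0 := by simpa using hu.symm
    simp [hw] at hne

lemma add_ne_zero (h : ReDivNonneg u v) : u + v ≠ 0 := by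
  obtain ⟨hre, hne⟩ := h
  intro huv
  obtain rfl : u = -v := eq_neg_of_add_eq_zero_left huv
  have hv : v ≠ 0 := by simpa using hne
  have : 0 < Complex.normSq v := Complex.normSq_pos.mpr hv
  rw [neg_mul, Complex.mul_conj, Complex.neg_re, Complex.ofReal_re] at hre
  linarith

lemma linear_const (hd : 0 ≤ d) (he : 0 < e) (hz : 0 ≤ z.re) : ReDivNonneg (d * z) e := by
  have he' : (e : ℂ) ≠ 0 := mod_cast he.ne'
  refine of_eq_mul_add (c := d / e) (by positivity) hz (zero_right he') ?_
  push_cast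
  field_simp
  ring

lemma quadratic_linear (hb : 0 ≤ b) (hd : 0 < d) (he : 0 < e) (hz : 0 ≤ z.re) :
    ReDivNonneg (b * z ^ 2 + e) (d * z) := by
  have hd' : (d : ℂ) ≠ 0 := mod_cast hd.ne'
  refine of_eq_mul_add (c := b / d) (by positivity) hz (linear_const hd.le he hz) ?_
  push_cast
  field_simp

lemma cubic_quadratic (ha : 0 ≤ a) (hb : 0 < b) (he : 0 < e) (hdet : a * e < b * d)
    (hz : 0 ≤ z.re) : ReDivNonneg (a * z ^ 3 + d * z) (b * z ^ 2 + e) := by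
  have hb' : (b : ℂ) ≠ 0 := mod_cast hb.ne'
  have hd : 0 < (b * d - a * e) / b := div_pos (sub_pos.mpr hdet) hb
  refine of_eq_mul_add (c := a / b) (by positivity) hz (quadratic_linear hb.le hd he hz) ?_
  push_cast
  field_simp
  ring

lemma quartic_cubic {a₀ a₁ a₂ a₃ a₄ : ℝ} (h₀ : 0 ≤ a₀) (h₁ : 0 < a₁) (h₃ : 0 < a₃) (h₄ : 0 < a₄)
    (hdet : a₀ * a₃ ^ 2 + a₁ ^ 2 * a₄ < a₁ * a₂ * a₃) (hz : 0 ≤ z.re) :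
    ReDivNonneg (a₀ * z ^ 4 + a₂ * z ^ 2 + a₄) (a₁ * z ^ 3 + a₃ * z) := by
  have h₁' : (a₁ : ℂ) ≠ 0 := mod_cast h₁.ne'
  have hdet' : a₁ ^ 2 * a₄ < (a₁ * a₂ - a₀ * a₃) * a₃ := by linarith
  have hminor : 0 < a₁ * a₂ - a₀ * a₃ :=
    pos_of_mul_pos_left (lt_trans (by positivity) hdet') h₃.le
  have hcubic : a₁ * a₄ < (a₁ * a₂ - a₀ * a₃) / a₁ * a₃ := by
    rw [div_mul_eq_mul_div, lt_div_iff₀ h₁]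
    linarith
  refine of_eq_mul_add (c := a₀ / a₁) (by positivity) hz
    (cubic_quadratic h₁.le (div_pos hminor h₁) h₄ hcubic hz) ?_
  push_cast
  field_simp
  ring

end ReDivNonneg

theorem re_neg_of_routh_hurwitz_quartic {a₀ a₁ a₂ a₃ a₄ : ℝ} (h₀ : 0 ≤ a₀) (h₁ : 0 < a₁)
    (h₃ : 0 < a₃) (h₄ : 0 < a₄) (hdet : a₀ * a₃ ^ 2 + a₁ ^ 2 * a₄ < a₁ * a₂ * a₃) {z : ℂ}
    (hroot : a₀ * z ^ 4 + a₁ * z ^ 3 + a₂ * z ^ 2 + a₃ * z + a₄ = 0) : z.re < 0 := by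
  by_contra! hz
  exact (ReDivNonneg.quartic_cubic h₀ h₁ h₃ h₄ hdet hz).add_ne_zero (by linear_combination hroot)

/-- Routh–Hurwitz stability of the closed loop with the integral-action linear
policy (open loop `s⁻¹ G(s)`): if `0 < ς < 1` and `k > 1/(1 - ς)`, every
complex root of `ς X⁴ + X³ + k X² + k X + k` has strictly negative real part. -/
theorem stmt_7 (ς k : ℝ) (hς : 0 < ς) (hς1 : ς < 1) (hk : k > 1 / (1 - ς)) :
    ∀ z : ℂ, (ς : ℂ) * z ^ 4 + z ^ 3 + (k : ℂ) * z ^ 2 + (k : ℂ) * z + (k : ℂ) = 0 →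
      z.re < 0 := by
  intro z hroot
  have hς' : 0 < 1 - ς := sub_pos.mpr hς1
  have hk₀ : 0 < k := lt_trans (by positivity) hk
  have hgain : 1 < k * (1 - ς) := (div_lt_iff₀ hς').mp hk
  have hdet : ς * k ^ 2 + 1 ^ 2 * k < 1 * k * k := by
    linarith [mul_lt_mul_of_pos_left hgain hk₀]
  exact re_neg_of_routh_hurwitz_quartic hς.le one_pos hk₀ hk₀ hdet (by simpa using hroot)
end

section
/- Let ς > 0 and k > 0 be real numbers and define, for real s with s ≠ 0 and ς·s + 1 ≠ 0, G(s) = (s² + s + 1)/(ς·s²·(s + 1/ς)). Then G(s)/(1 + k·G(s)) tends to 1/k ≠ 0 as s → 0 (along nonzero real s). Hence the static (memory-less) policy does not reject a constant input disturbance: the steady-state effect of a step disturbance on the output is the nonzero value 1/k. -/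
open Filter Topology

/-!
Since `f / (1 + k f) = 1 / (f⁻¹ + k)`, a static gain `k ≠ 0` around a plant of unbounded gain leaves
the disturbance gain `1 / k`, whatever the plant. The plant here has a double pole at `s = 0` that
its numerator `s² + s + 1` does not cancel, so its gain is unbounded there.
-/

section NormedField

open Bornology (cobounded)

variable {α 𝕜 : Type*} [NormedField 𝕜] {l : Filter α}

lemma tendsto_div_cobounded_of_tendsto_nhdsNE_zero {n d : α → 𝕜} {a : 𝕜}
    (hn : Tendsto n l (𝓝 a)) (ha : a ≠ 0) (hd : Tendsto d l (𝓝[≠] 0)) :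
    Tendsto (fun x => n x / d x) l (cobounded 𝕜) := by
  obtain ⟨hd_zero, hd_ne⟩ := tendsto_nhdsWithin_iff.mp hd
  have hinv : Tendsto (fun x => d x / n x) l (𝓝[≠] 0) := by
    refine tendsto_nhdsWithin_iff.mpr ⟨zero_div a ▸ hd_zero.div hn ha, ?_⟩
    filter_upwards [hd_ne, hn.eventually_ne ha] with x hdx hnx using div_ne_zero hdx hnx
  simpa only [Function.comp_def, inv_div] using tendsto_inv₀_nhdsNE_zero.comp hinv

lemma tendsto_div_one_add_mul_of_tendsto_cobounded {f : α → 𝕜} {k : 𝕜} (hk : k ≠ 0)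
    (hf : Tendsto f l (cobounded 𝕜)) :
    Tendsto (fun x => f x / (1 + k * f x)) l (𝓝 (1 / k)) := by
  have hlim : Tendsto (fun x => 1 / ((f x)⁻¹ + k)) l (𝓝 (1 / k)) := by
    have hden : Tendsto (fun x => (f x)⁻¹ + k) l (𝓝 k) := by
      simpa only [Function.comp_def, zero_add] using
        (tendsto_inv₀_cobounded.comp hf).add_const k
    exact tendsto_const_nhds.div hden hk
  refine hlim.congr' ?_
  filter_upwards [hf.eventually_ne_cobounded 0] with x hx
  calc 1 / ((f x)⁻¹ + k) = f x * 1 / (f x * ((f x)⁻¹ + k)) := (mul_div_mul_left _ _ hx).symm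
    _ = f x / (1 + k * f x) := by rw [mul_one, mul_add, mul_inv_cancel₀ hx, mul_comm (f x) k]

lemma eventually_mul_add_one_ne_zero_nhdsNE_zero (ς : 𝕜) :
    ∀ᶠ s in 𝓝[≠] (0 : 𝕜), ς * s + 1 ≠ 0 := by
  have hcont : ContinuousAt (fun s : 𝕜 => ς * s + 1) 0 := by fun_prop
  exact (hcont.eventually_ne (by simp)).filter_mono nhdsWithin_le_nhds

lemma tendsto_plant_den_nhdsNE_zero {ς : 𝕜} (hς : ς ≠ 0) :
    Tendsto (fun s : 𝕜 => ς * s ^ 2 * (s + 1 / ς)) (𝓝[≠] 0) (𝓝[≠] 0) := by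
  have hcont : Continuous fun s : 𝕜 => ς * s ^ 2 * (s + 1 / ς) := by fun_prop
  refine tendsto_nhdsWithin_iff.mpr
    ⟨(hcont.tendsto' 0 0 (by simp)).mono_left nhdsWithin_le_nhds, ?_⟩
  filter_upwards [eventually_mul_add_one_ne_zero_nhdsNE_zero ς, self_mem_nhdsWithin]
    with s hs hs0
  have hfactor : ς * s ^ 2 * (s + 1 / ς) = s ^ 2 * (ς * s + 1) := by field_simp
  exact hfactor ▸ mul_ne_zero (pow_ne_zero 2 hs0) hs

lemma tendsto_plant_nhdsNE_zero_cobounded {ς : 𝕜} (hς : ς ≠ 0) :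
    Tendsto (fun s : 𝕜 => (s ^ 2 + s + 1) / (ς * s ^ 2 * (s + 1 / ς))) (𝓝[≠] 0)
      (cobounded 𝕜) := by
  have hcont : Continuous fun s : 𝕜 => s ^ 2 + s + 1 := by fun_prop
  have hnum : Tendsto (fun s : 𝕜 => s ^ 2 + s + 1) (𝓝[≠] 0) (𝓝 1) :=
    (hcont.tendsto' 0 1 (by simp)).mono_left nhdsWithin_le_nhds
  exact tendsto_div_cobounded_of_tendsto_nhdsNE_zero hnum one_ne_zero
    (tendsto_plant_den_nhdsNE_zero hς)

theorem stmt_9_general {ς k : 𝕜} (hς : ς ≠ 0) (hk : k ≠ 0) {G : 𝕜 → 𝕜}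
    (hG : ∀ s, s ≠ 0 → ς * s + 1 ≠ 0 →
      G s = (s ^ 2 + s + 1) / (ς * s ^ 2 * (s + 1 / ς))) :
    Tendsto (fun s => G s / (1 + k * G s)) (𝓝[≠] 0) (𝓝 (1 / k)) ∧ 1 / k ≠ 0 := by
  have hG_plant : (fun s => (s ^ 2 + s + 1) / (ς * s ^ 2 * (s + 1 / ς))) =ᶠ[𝓝[≠] 0] G := by
    filter_upwards [eventually_mul_add_one_ne_zero_nhdsNE_zero ς, self_mem_nhdsWithin]
      with s hs hs0 using (hG s hs0 hs).symm
  have hG_cobounded : Tendsto G (𝓝[≠] 0) (cobounded 𝕜) :=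
    (tendsto_plant_nhdsNE_zero_cobounded hς).congr' hG_plant
  exact ⟨tendsto_div_one_add_mul_of_tendsto_cobounded hk hG_cobounded, one_div_ne_zero hk⟩

end NormedField

/-- With the plant `G(s) = (s² + s + 1)/(ς s² (s + 1/ς))` in unity negative
feedback with static gain `k > 0`, the input-disturbance-to-output transfer
`G(s)/(1 + k G(s))` tends to `1/k ≠ 0` as `s → 0` along nonzero real `s`:
the static (memory-less) policy does not reject a constant input disturbance. -/
theorem stmt_9 (ς k : ℝ) (hς : 0 < ς) (hk : 0 < k)
    (G : ℝ → ℝ)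
    (hG : ∀ s, s ≠ 0 → ς * s + 1 ≠ 0 →
      G s = (s ^ 2 + s + 1) / (ς * s ^ 2 * (s + 1 / ς))) :
    Tendsto (fun s => G s / (1 + k * G s)) (𝓝[≠] (0 : ℝ)) (𝓝 (1 / k)) ∧
    (1 / k : ℝ) ≠ 0 :=
  stmt_9_general hς.ne' hk.ne' hG
end

section
/- Let ς, k, r be real numbers with 0 < ς < 1 and k > 1/(1 − ς). Let q, p, v, a : ℝ → ℝ be differentiable functions satisfying the integral-action closed-loop equations q'(t) = r − (p(t) + v(t) + a(t)), p' = v, v' = a, a'(t) = ( −a(t) + k·q(t) )/ς for all t ≥ 0. Then (q(t), p(t), v(t), a(t)) → (0, r, 0, 0) as t → ∞; in particular the output y = p + v + a converges to the constant reference r. -/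
open Filter Topology

/-!
If `p` annihilates `A` and `x' = A x`, factoring `p = ∏ (X - λᵢ)` lets the trajectory be peeled off
one root at a time: `y = (A - λ₂) ⋯ (A - λₙ) x` satisfies `y' = λ₁ y + (A - λ₁) y`, so when
`re λ₁ < 0` decay of `(A - λ₁) y` forces decay of `y`. Hence `x → 0` as soon as all roots of the
characteristic polynomial have negative real part. For the closed loop this polynomial is
`X⁴ + X³/ς + (k/ς)(X² + X + 1)`, whose Routh–Hurwitz condition `k² > ς k² + k` is `k > 1/(1 - ς)`.
The Routh–Hurwitz condition itself is obtained from the Stieltjes continued fraction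
`z + c + b₂/(z + b₁/(z + b₀/z))`, every stage of which stays in the closed right half-plane
when `z` does.
-/

section Hurwitz

open Polynomial ComplexConjugate

variable {R : Type*} [CommSemiring R] [Algebra R ℂ]

/-- A polynomial is Hurwitz if all its complex roots lie in the open left half-plane, the
stability criterion for linear differential equations. -/
def IsHurwitz (p : R[X]) : Prop :=
  ∀ z : ℂ, aeval z p = 0 → z.re < 0

theorem IsHurwitz.ne_zero {p : R[X]} (hp : IsHurwitz p) : p ≠ 0 := by
  rintro rfl
  simpa using hp 0 (map_zero _)

theorem IsHurwitz.map_algebraMap {p : R[X]} (hp : IsHurwitz p) :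
    IsHurwitz (p.map (algebraMap R ℂ)) := fun z hz =>
  hp z (by rwa [aeval_map_algebraMap] at hz)

/-- The leading principal characteristic polynomials of the Schwarz matrix with parameters `b`.
Their consecutive quotients are the truncations `X + bₙ / (X + ⋯ + b₁ / (X + b₀ / X))` of a
Stieltjes continued fraction. -/
noncomputable def schwarzPoly (b : ℕ → ℝ) : ℕ → ℝ[X]
  | 0 => 1
  | 1 => X
  | n + 2 => X * schwarzPoly b (n + 1) + C (b n) * schwarzPoly b n

variable {b : ℕ → ℝ} {n : ℕ} {z : ℂ}

theorem aeval_schwarzPoly_add_two (b : ℕ → ℝ) (n : ℕ) (z : ℂ) :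
    aeval z (schwarzPoly b (n + 2)) =
      z * aeval z (schwarzPoly b (n + 1)) + b n * aeval z (schwarzPoly b n) := by
  simp [schwarzPoly]

theorem aeval_schwarzPoly_ne_zero_of_succ_eq_zero (hb : ∀ i < n, b i ≠ 0)
    (h : aeval z (schwarzPoly b (n + 1)) = 0) : aeval z (schwarzPoly b n) ≠ 0 := by
  induction n with
  | zero => simp [schwarzPoly]
  | succ n ih =>
    intro h'
    have hn : aeval z (schwarzPoly b n) = 0 := by
      simpa [aeval_schwarzPoly_add_two, h', hb n n.lt_succ_self] using h
    exact ih (fun i hi => hb i (hi.trans n.lt_succ_self)) h' hn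

/-- The quotient of consecutive Schwarz polynomials maps the closed right half-plane to itself;
multiplying by the conjugate of the denominator avoids dividing by its zeros. -/
theorem re_aeval_schwarzPoly_mul_conj_nonneg (hb : ∀ i < n, 0 ≤ b i) (hz : 0 ≤ z.re) :
    0 ≤ (aeval z (schwarzPoly b (n + 1)) * conj (aeval z (schwarzPoly b n))).re := by
  induction n with
  | zero => simpa [schwarzPoly] using hz
  | succ n ih =>
    have hprev := ih fun i hi => hb i (hi.trans n.lt_succ_self)
    have hbn := hb n n.lt_succ_self
    rw [aeval_schwarzPoly_add_two]
    set u := aeval z (schwarzPoly b (n + 1))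
    set w := aeval z (schwarzPoly b n)
    have hsplit : ((z * u + b n * w) * conj u).re =
        z.re * Complex.normSq u + b n * (u * conj w).re := by
      simp only [Complex.mul_re, Complex.add_re, Complex.ofReal_re, Complex.ofReal_im, zero_mul,
        sub_zero, Complex.conj_re, Complex.add_im, Complex.mul_im, add_zero, Complex.conj_im,
        mul_neg, sub_neg_eq_add, Complex.normSq_apply]
      ring
    rw [hsplit]
    exact add_nonneg (mul_nonneg hz (Complex.normSq_nonneg u)) (mul_nonneg hbn hprev)

theorem isHurwitz_schwarzPoly_succ_add_C_mul {c : ℝ} (hb : ∀ i < n, 0 < b i) (hc : 0 < c) :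
    IsHurwitz (schwarzPoly b (n + 1) + C c * schwarzPoly b n) := by
  intro z hroot
  by_contra! hz
  have hnonneg := re_aeval_schwarzPoly_mul_conj_nonneg (fun i hi => (hb i hi).le) hz
  have hsucc : aeval z (schwarzPoly b (n + 1)) = -(c * aeval z (schwarzPoly b n)) :=
    eq_neg_of_add_eq_zero_left (by simpa using hroot)
  have hzero : aeval z (schwarzPoly b n) = 0 := by
    rw [hsucc, neg_mul, mul_assoc, Complex.mul_conj, ← Complex.ofReal_mul, Complex.neg_re,
      Complex.ofReal_re, neg_nonneg] at hnonneg
    exact Complex.normSq_eq_zero.mp <|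
      (nonpos_of_mul_nonpos_right hnonneg hc).antisymm (Complex.normSq_nonneg _)
  exact aeval_schwarzPoly_ne_zero_of_succ_eq_zero (fun i hi => (hb i hi).ne')
    (by simp [hsucc, hzero]) hzero

/-- The **Routh–Hurwitz criterion** for monic quartics: with `s = a₁ / a₃`, the Schwarz parameters
are `a₀ / (a₂ - s)`, `s - a₀ / (a₂ - s)` and `a₂ - s`. -/
theorem isHurwitz_quartic {a₀ a₁ a₂ a₃ : ℝ} (h₀ : 0 < a₀) (h₁ : 0 < a₁) (h₃ : 0 < a₃)
    (h : a₁ ^ 2 + a₃ ^ 2 * a₀ < a₃ * a₂ * a₁) :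
    IsHurwitz (X ^ 4 + C a₃ * X ^ 3 + C a₂ * X ^ 2 + C a₁ * X + C a₀) := by
  obtain ⟨s, hs, rfl⟩ : ∃ s, 0 < s ∧ a₁ = a₃ * s := ⟨a₁ / a₃, by positivity, by field_simp⟩
  have hlt : a₀ < s * (a₂ - s) := by
    refine lt_of_mul_lt_mul_left ?_ (sq_nonneg a₃)
    linarith
  have hb₂ : 0 < a₂ - s := pos_of_mul_pos_right (h₀.trans hlt) hs.le
  have hb₀ : 0 < a₀ / (a₂ - s) := div_pos h₀ hb₂
  have hb₁ : 0 < s - a₀ / (a₂ - s) := sub_pos.mpr ((div_lt_iff₀ hb₂).mpr hlt)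
  let b : ℕ → ℝ := fun | 0 => a₀ / (a₂ - s) | 1 => s - a₀ / (a₂ - s) | _ => a₂ - s
  have hb : ∀ i < 3, 0 < b i := by
    intro i hi
    interval_cases i <;> assumption
  have ha₀ : C (a₂ - s) * C (a₀ / (a₂ - s)) = C a₀ := by
    rw [← C_mul, mul_div_cancel₀ a₀ hb₂.ne']
  convert! isHurwitz_schwarzPoly_succ_add_C_mul hb h₃ using 1
  simp only [schwarzPoly, b, ← ha₀, C_mul, C_sub]
  ring

end Hurwitz

section Decay

open Polynomial

variable {E : Type*} [NormedAddCommGroup E] [NormedSpace ℂ E]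

/-- The integrating factor `exp (-μ (s - T))` brings in `re μ` where the usual Grönwall inequality
would have `‖μ‖`, so that a negative real part gives decay. -/
theorem norm_le_gronwallBound_of_hasDerivAt_smul_add {x f : ℝ → E} {μ : ℂ} {T t ε : ℝ}
    (hx : ∀ s, T ≤ s → HasDerivAt x (μ • x s + f s) s) (hf : ∀ s, T ≤ s → ‖f s‖ ≤ ε)
    (ht : T ≤ t) : ‖x t‖ ≤ gronwallBound ‖x T‖ μ.re ε (t - T) := by
  have hnorm (s : ℝ) : ‖Complex.exp (-(μ * (s - T)))‖ = Real.exp (-(μ.re * (s - T))) := by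
    simp [Complex.norm_exp]
  have hw (s : ℝ) (hs : T ≤ s) : HasDerivAt (fun s : ℝ => Complex.exp (-(μ * (s - T))) • x s)
      (Complex.exp (-(μ * (s - T))) • f s) s := by
    have hexp : HasDerivAt (fun s : ℝ => Complex.exp (-(μ * (s - T))))
        (Complex.exp (-(μ * (s - T))) * -(μ * 1)) s :=
      ((Complex.ofRealCLM.hasDerivAt.sub_const _).const_mul μ).fun_neg.cexp
    refine (hexp.fun_smul (hx s hs)).congr_deriv ?_
    module
  have hB (s : ℝ) : HasDerivAt
      (fun s => Real.exp (-(μ.re * (s - T))) * gronwallBound ‖x T‖ μ.re ε (s - T))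
      (Real.exp (-(μ.re * (s - T))) * ε) s := by
    have hexp : HasDerivAt (fun s => Real.exp (-(μ.re * (s - T))))
        (Real.exp (-(μ.re * (s - T))) * -(μ.re * 1)) s :=
      (((hasDerivAt_id s).sub_const T).const_mul μ.re).fun_neg.exp
    refine (hexp.fun_mul (hasDerivAt_gronwallBound_shift _ _ _ _ _)).congr_deriv ?_
    ring
  have hbound := image_norm_le_of_norm_deriv_right_le_deriv_boundary (a := T) (b := t)
    (fun s hs => (hw s hs.1).continuousAt.continuousWithinAt)
    (fun s hs => (hw s hs.1).hasDerivWithinAt) (by simp [gronwallBound_x0]) hB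
    (fun s hs => by
      rw [norm_smul, hnorm]
      exact mul_le_mul_of_nonneg_left (hf s hs.1) (Real.exp_pos _).le)
    (Set.right_mem_Icc.mpr ht)
  rw [norm_smul, hnorm] at hbound
  exact le_of_mul_le_mul_left hbound (Real.exp_pos _)

theorem tendsto_gronwallBound_of_neg {K : ℝ} (hK : K < 0) (δ ε : ℝ) :
    Tendsto (gronwallBound δ K ε) atTop (𝓝 (-(ε / K))) := by
  have hexp : Tendsto (fun t => Real.exp (K * t)) atTop (𝓝 0) :=
    Real.tendsto_exp_atBot.comp (tendsto_id.const_mul_atTop_of_neg hK)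
  rw [gronwallBound_of_K_ne_0 hK.ne]
  simpa using (hexp.const_mul δ).add ((hexp.sub_const 1).const_mul (ε / K))

theorem tendsto_zero_of_hasDerivAt_smul_add {x f : ℝ → E} {μ : ℂ} (hμ : μ.re < 0)
    (hx : ∀ᶠ t in atTop, HasDerivAt x (μ • x t + f t) t) (hf : Tendsto f atTop (𝓝 0)) :
    Tendsto x atTop (𝓝 0) := by
  rw [Metric.tendsto_nhds]
  simp only [dist_zero_right]
  intro η hη
  set ε := η / 2 * -μ.re with hε
  have hε_pos : 0 < ε := mul_pos (half_pos hη) (neg_pos.mpr hμ)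
  have hf_small : ∀ᶠ t in atTop, ‖f t‖ < ε := by
    simpa using (tendsto_order.1 hf.norm).2 ε (by simpa using hε_pos)
  obtain ⟨T, hT⟩ := eventually_atTop.1 (hx.and hf_small)
  have hlimit : Tendsto (fun t => gronwallBound ‖x T‖ μ.re ε (t - T)) atTop (𝓝 (η / 2)) := by
    have hval : -(ε / μ.re) = η / 2 := by
      rw [hε]
      field_simp [hμ.ne]
    rw [← hval]
    exact (tendsto_gronwallBound_of_neg hμ _ _).comp (tendsto_atTop_add_const_right _ _ tendsto_id)
  filter_upwards [eventually_ge_atTop T, hlimit.eventually_lt_const (half_lt_self hη)] with t ht hlt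
  exact (norm_le_gronwallBound_of_hasDerivAt_smul_add (fun s hs => (hT s hs).1)
    (fun s hs => (hT s hs).2.le) ht).trans_lt hlt

theorem tendsto_zero_of_tendsto_aeval_prod_X_sub_C {A : E →L[ℂ] E} {x : ℝ → E}
    {s : Multiset ℂ} (hs : ∀ μ ∈ s, μ.re < 0)
    (hx : ∀ᶠ t in atTop, HasDerivAt x (A (x t)) t)
    (h : Tendsto (fun t => aeval A (s.map fun μ => X - C μ).prod (x t)) atTop (𝓝 0)) :
    Tendsto x atTop (𝓝 0) := by
  induction s using Multiset.induction_on with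
  | empty => simpa using h
  | cons μ s ih =>
    rw [Multiset.forall_mem_cons] at hs
    set B := aeval A (s.map fun μ => X - C μ).prod
    have hcomm (v : E) : B (A v) = A (B v) := by
      have hBA : B * A = A * B := by
        have h := congrArg (aeval A) (mul_comm (s.map fun μ => X - C μ).prod X)
        rwa [map_mul, map_mul, aeval_X] at h
      exact DFunLike.congr_fun hBA v
    have hBx : ∀ᶠ t in atTop, HasDerivAt (fun t => B (x t))
        (μ • B (x t) + (A - algebraMap ℂ _ μ) (B (x t))) t := by
      filter_upwards [hx] with t ht
      refine (((B.restrictScalars ℝ).hasFDerivAt).comp_hasDerivAt t ht).congr_deriv ?_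
      simp [hcomm, Algebra.algebraMap_eq_smul_one]
    refine ih hs.2 (tendsto_zero_of_hasDerivAt_smul_add hs.1 hBx ?_)
    simpa [B] using h

theorem IsHurwitz.tendsto_zero_of_tendsto_aeval {p : ℂ[X]} (hp : IsHurwitz p)
    {A : E →L[ℂ] E} {x : ℝ → E} (hx : ∀ᶠ t in atTop, HasDerivAt x (A (x t)) t)
    (h : Tendsto (fun t => aeval A p (x t)) atTop (𝓝 0)) : Tendsto x atTop (𝓝 0) := by
  have hlead : p.leadingCoeff ≠ 0 := leadingCoeff_ne_zero.mpr hp.ne_zero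
  refine tendsto_zero_of_tendsto_aeval_prod_X_sub_C (s := p.roots) (fun μ hμ => hp μ ?_) hx ?_
  · simpa using isRoot_of_mem_roots hμ
  · rw [(IsAlgClosed.splits p).eq_prod_roots] at h
    simpa [hlead, Algebra.algebraMap_eq_smul_one, smul_smul] using h.const_smul p.leadingCoeff⁻¹

theorem tendsto_zero_of_isHurwitz_charpoly {ι : Type*} [Fintype ι] [DecidableEq ι]
    {A : Matrix ι ι ℝ} (hA : IsHurwitz A.charpoly) {x : ℝ → ι → ℝ}
    (hx : ∀ᶠ t in atTop, HasDerivAt x (A.mulVec (x t)) t) : Tendsto x atTop (𝓝 0) := by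
  let Φ : Matrix ι ι ℂ ≃ₐ[ℂ] ((ι → ℂ) →L[ℂ] (ι → ℂ)) :=
    Matrix.toLinAlgEquiv'.trans (Module.End.toContinuousLinearMap (ι → ℂ))
  let AC : Matrix ι ι ℂ := A.map (algebraMap ℝ ℂ)
  have hAC : IsHurwitz AC.charpoly := by
    rw [Matrix.charpoly_map]
    exact hA.map_algebraMap
  have hcayley : aeval (Φ AC) AC.charpoly = 0 := by
    rw [aeval_algHom_apply, Matrix.aeval_self_charpoly, map_zero]
  have hxC : ∀ᶠ t in atTop, HasDerivAt (fun t i => (x t i : ℂ)) (Φ AC fun i => (x t i : ℂ)) t := by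
    filter_upwards [hx] with t ht
    refine hasDerivAt_pi.mpr fun i => (hasDerivAt_pi.mp ht i).ofReal_comp.congr_deriv ?_
    change ((A.mulVec (x t) i : ℝ) : ℂ) = AC.mulVec (fun i => (x t i : ℂ)) i
    simp [AC, Matrix.mulVec, dotProduct]
  have hlim := hAC.tendsto_zero_of_tendsto_aeval hxC (by simp [hcayley])
  rw [tendsto_pi_nhds] at hlim ⊢
  intro i
  simpa [Function.comp_def] using (Complex.continuous_re.tendsto _).comp (hlim i)

end Decay

section ClosedLoop

open Polynomial

/-- The state matrix of the integral-action closed loop in the coordinates `(q, p - r, v, a)`. -/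
noncomputable def closedLoopMatrix (ς k : ℝ) : Matrix (Fin 4) (Fin 4) ℝ :=
  !![0, -1, -1, -1; 0, 0, 1, 0; 0, 0, 0, 1; k / ς, 0, 0, -(1 / ς)]

theorem closedLoopMatrix_mulVec (ς k q e v a : ℝ) :
    (closedLoopMatrix ς k).mulVec ![q, e, v, a] = ![-(e + v + a), v, a, (-a + k * q) / ς] := by
  ext i
  fin_cases i <;> simp [closedLoopMatrix, Matrix.mulVec, dotProduct, Fin.sum_univ_four] <;> ring

theorem charpoly_closedLoopMatrix (ς k : ℝ) : (closedLoopMatrix ς k).charpoly =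
    X ^ 4 + C (1 / ς) * X ^ 3 + C (k / ς) * X ^ 2 + C (k / ς) * X + C (k / ς) := by
  have hcharmatrix : (closedLoopMatrix ς k).charmatrix =
      !![X, 1, 1, 1; 0, X, -1, 0; 0, 0, X, -1; -C (k / ς), 0, 0, X + C (1 / ς)] := by
    ext1 i j
    fin_cases i <;> fin_cases j <;> simp [closedLoopMatrix]
  rw [Matrix.charpoly, hcharmatrix]
  simp [Matrix.det_succ_row_zero, Fin.sum_univ_succ, Fin.succAbove]
  ring

theorem isHurwitz_charpoly_closedLoopMatrix {ς k : ℝ} (hς : 0 < ς) (hς1 : ς < 1)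
    (hk : 1 / (1 - ς) < k) : IsHurwitz (closedLoopMatrix ς k).charpoly := by
  have hς1' : 0 < 1 - ς := sub_pos.mpr hς1
  have hk_pos : 0 < k := (one_div_pos.mpr hς1').trans hk
  have hgain : 1 < k * (1 - ς) := (div_lt_iff₀ hς1').mp hk
  rw [charpoly_closedLoopMatrix]
  refine isHurwitz_quartic (by positivity) (by positivity) (by positivity) ?_
  field_simp
  linarith

end ClosedLoop

/-- Integral-action linear policy in the undisturbed training environment:
the closed loop `q' = r - (p + v + a)`, `p' = v`, `v' = a`,
`a' = (-a + k q)/ς` with `0 < ς < 1` and `k > 1/(1 - ς)` satisfies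
`(q, p, v, a) → (0, r, 0, 0)` as `t → ∞`; in particular the output
`y = p + v + a` converges to the reference `r`. -/
theorem stmt_14 (ς k r : ℝ) (hς : 0 < ς) (hς1 : ς < 1) (hk : k > 1 / (1 - ς))
    (q p v a : ℝ → ℝ)
    (hq : Differentiable ℝ q) (hp : Differentiable ℝ p)
    (hv : Differentiable ℝ v) (ha : Differentiable ℝ a)
    (hqe : ∀ t, 0 ≤ t → deriv q t = r - (p t + v t + a t))
    (hpv : ∀ t, 0 ≤ t → deriv p t = v t)
    (hva : ∀ t, 0 ≤ t → deriv v t = a t)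
    (hcl : ∀ t, 0 ≤ t → deriv a t = (-a t + k * q t) / ς) :
    Tendsto (fun t => (q t, p t, v t, a t)) atTop (𝓝 (0, r, 0, 0)) := by
  have hlim : Tendsto (fun t => ![q t, p t - r, v t, a t]) atTop (𝓝 0) := by
    refine tendsto_zero_of_isHurwitz_charpoly
      (isHurwitz_charpoly_closedLoopMatrix hς hς1 hk) ?_
    filter_upwards [eventually_ge_atTop 0] with t ht
    have dq := (hq t).hasDerivAt.congr_deriv (hqe t ht)
    have dp := (hp t).hasDerivAt.congr_deriv (hpv t ht)
    have dv := (hv t).hasDerivAt.congr_deriv (hva t ht)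
    have da := (ha t).hasDerivAt.congr_deriv (hcl t ht)
    rw [closedLoopMatrix_mulVec, hasDerivAt_pi]
    simpa [Fin.forall_fin_succ] using ⟨dq.congr_deriv (by ring), dp, dv, da⟩
  rw [tendsto_pi_nhds] at hlim
  have hp_lim : Tendsto p atTop (𝓝 r) := by simpa using (hlim 1).add_const r
  exact (hlim 0).prodMk_nhds (hp_lim.prodMk_nhds ((hlim 2).prodMk_nhds (hlim 3)))
end
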